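/- arXiv:2003.12029 — 2 statements merged into one kernel-verified Lean document; each statement's English description precedes it below -/
import Mathlib

section
/- Let G be a connected graph with at least one edge (non-trivial). Then G has a flexible labeling if and only if G has a NAC-coloring. -/
open SimpleGraph Real

/-- The Euclidean plane. -/
abbrev Plane : Type := EuclideanSpace ℝ (Fin 2)

variable {V : Type*}

/-- A placement of a graph in the plane: endpoints of edges do not coincide. -/
def IsPlacement (G : SimpleGraph V) (p : V → Plane) : Prop :=
  ∀ ⦃u v : V⦄, G.Adj u v → p u ≠ p v

/-- Two placements are equivalent as frameworks on `G` if corresponding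
edge lengths agree. -/
def FrameworkEquiv (G : SimpleGraph V) (p q : V → Plane) : Prop :=
  ∀ ⦃u v : V⦄, G.Adj u v → dist (p u) (p v) = dist (q u) (q v)

/-- Two placements are congruent if all pairwise distances agree. -/
def PCongruent (p q : V → Plane) : Prop :=
  ∀ u v : V, dist (p u) (p v) = dist (q u) (q v)

/-- A flex of the framework `(G, p)`: a continuous path of placements on `[0,1]`
starting at `p`, each equivalent to `(G, p)`. -/
def IsFlex (G : SimpleGraph V) (p : V → Plane) (f : ℝ → V → Plane) : Prop :=
  ContinuousOn f (Set.Icc 0 1) ∧ f 0 = p ∧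
    ∀ t ∈ Set.Icc (0 : ℝ) 1, IsPlacement G (f t) ∧ FrameworkEquiv G p (f t)

/-- A flex is trivial if every placement along it is congruent to the initial one. -/
def IsTrivialFlex (p : V → Plane) (f : ℝ → V → Plane) : Prop :=
  ∀ t ∈ Set.Icc (0 : ℝ) 1, PCongruent (f t) p

/-- The placement `p` induces the labeling `lam`. -/
def Induces (G : SimpleGraph V) (p : V → Plane) (lam : Sym2 V → ℝ) : Prop :=
  ∀ ⦃u v : V⦄, G.Adj u v → dist (p u) (p v) = lam s(u, v)

/-- A labeling (positive on the edges) is flexible if some framework inducing it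
has a non-trivial flex. -/
def IsFlexibleLabeling (G : SimpleGraph V) (lam : Sym2 V → ℝ) : Prop :=
  (∀ e ∈ G.edgeSet, 0 < lam e) ∧
    ∃ p : V → Plane, Induces G p lam ∧ ∃ f, IsFlex G p f ∧ ¬ IsTrivialFlex p f

/-- A labeling is a proper flexible labeling if some framework inducing it has a
non-trivial flex in which all but finitely many placements are injective. -/
def IsProperFlexibleLabeling (G : SimpleGraph V) (lam : Sym2 V → ℝ) : Prop :=
  (∀ e ∈ G.edgeSet, 0 < lam e) ∧
    ∃ p : V → Plane, Induces G p lam ∧ ∃ f, IsFlex G p f ∧ ¬ IsTrivialFlex p f ∧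
      {t ∈ Set.Icc (0 : ℝ) 1 | ¬ Function.Injective (f t)}.Finite

/-- A graph is movable if it has a proper flexible labeling. -/
def Movable (G : SimpleGraph V) : Prop :=
  ∃ lam : Sym2 V → ℝ, IsProperFlexibleLabeling G lam

/-- A NAC-coloring: a surjective 2-coloring (`true` = red, `false` = blue) of the
edges such that every cycle is either monochromatic or contains at least two
edges of each color. -/
def IsNACColoring (G : SimpleGraph V) (δ : Sym2 V → Bool) : Prop :=
  (∃ e ∈ G.edgeSet, δ e = true) ∧ (∃ e ∈ G.edgeSet, δ e = false) ∧
    ∀ ⦃v : V⦄ (c : G.Walk v v), c.IsCycle →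
      (∀ e ∈ c.edges, δ e = true) ∨ (∀ e ∈ c.edges, δ e = false) ∨
        (2 ≤ (c.edges.filter (fun e => δ e)).length ∧
          2 ≤ (c.edges.filter (fun e => !(δ e))).length)

/-- The spanning subgraph of `G` whose edges are those of colour `b`. -/
def colorSubgraph (G : SimpleGraph V) (δ : Sym2 V → Bool) (b : Bool) : SimpleGraph V where
  Adj u v := G.Adj u v ∧ δ s(u, v) = b
  symm := ⟨fun u v h => ⟨h.1.symm, by rw [Sym2.eq_swap]; exact h.2⟩⟩
  loopless := ⟨fun u h => h.1.ne rfl⟩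

lemma colorSubgraph_le (G : SimpleGraph V) (δ : Sym2 V → Bool) (b : Bool) :
    colorSubgraph G δ b ≤ G := fun _ _ h => h.1

lemma color_eq_of_mem_edges {G : SimpleGraph V} {δ : Sym2 V → Bool} {b : Bool} {u v : V}
    (w : (colorSubgraph G δ b).Walk u v) {e : Sym2 V} (he : e ∈ w.edges) : δ e = b := by
  have h := w.edges_subset_edgeSet he
  induction e with
  | _ x y => exact h.2

/-- In a NAC-coloring, the ends of an edge are not joined by a path of the other colour. -/
lemma IsNACColoring.not_reachable {G : SimpleGraph V} {δ : Sym2 V → Bool}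
    (hδ : IsNACColoring G δ) {b : Bool} {u v : V} (huv : G.Adj u v) (hc : δ s(u, v) = !b) :
    ¬ (colorSubgraph G δ b).Reachable u v := by
  classical
  intro hr
  obtain ⟨q, hq⟩ := hr.symm.exists_isPath
  have hcol : ∀ e ∈ (q.mapLe (colorSubgraph_le G δ b)).edges, δ e = b := by
    intro e he
    rw [Walk.edges_mapLe_eq_edges] at he
    exact color_eq_of_mem_edges q he
  have hp : (q.mapLe (colorSubgraph_le G δ b)).IsPath := hq.mapLe _
  generalize q.mapLe (colorSubgraph_le G δ b) = p at hcol hp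
  have hcyc : (Walk.cons huv p).IsCycle := by
    rw [Walk.cons_isCycle_iff]
    refine ⟨hp, fun h => ?_⟩
    have := hcol _ h
    rw [hc] at this
    simp at this
  obtain ⟨e, he⟩ : ∃ e, e ∈ p.edges := by
    cases p with
    | nil => exact absurd rfl huv.ne
    | cons h p => exact ⟨_, List.mem_cons_self⟩
  have hfilter : p.edges.filter (fun e => δ e == !b) = [] := by
    rw [List.filter_eq_nil_iff]
    intro e he
    simp [hcol e he]
  have h3 := hδ.2.2 _ hcyc
  simp only [Walk.edges_cons, List.forall_mem_cons, List.filter_cons, hc] at h3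
  have h1 := hcol e he
  cases b
  · have hf : p.edges.filter (fun e => δ e) = [] := by simpa using hfilter
    simp [hf] at h3
    simp [h3 e he] at h1
  · have hf : p.edges.filter (fun e => !δ e) = [] := by simpa using hfilter
    simp [hf] at h3
    simp [h3 e he] at h1

lemma reachable_of_filter_eq_nil {G : SimpleGraph V} {δ : Sym2 V → Bool} {b : Bool} {u v : V}
    (w : G.Walk u v) (h : w.edges.filter (fun e => δ e == !b) = []) :
    (colorSubgraph G δ b).Reachable u v := by
  induction w with
  | nil => exact .refl _
  | @cons x y z hxy w ih =>
    rw [Walk.edges_cons, List.filter_cons] at h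
    split_ifs at h with hc
    have : (colorSubgraph G δ b).Adj x y := ⟨hxy, by cases b <;> simpa using hc⟩
    exact this.reachable.trans (ih h)

lemma exists_reachable_of_length_filter_eq_one {G : SimpleGraph V} {δ : Sym2 V → Bool} {b : Bool}
    {u v : V} (w : G.Walk u v) (h : (w.edges.filter (fun e => δ e == !b)).length = 1) :
    ∃ x y, G.Adj x y ∧ δ s(x, y) = (!b) ∧ (colorSubgraph G δ b).Reachable u x ∧
      (colorSubgraph G δ b).Reachable y v := by
  induction w with
  | nil => simp at h
  | @cons x y z hxy w ih =>
    rw [Walk.edges_cons, List.filter_cons] at h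
    split_ifs at h with hc
    · refine ⟨x, y, hxy, by simpa using hc, .refl _, reachable_of_filter_eq_nil w ?_⟩
      simpa using h
    · have : (colorSubgraph G δ b).Adj x y := ⟨hxy, by cases b <;> simpa using hc⟩
      obtain ⟨x', y', h1, h2, h3, h4⟩ := ih h
      exact ⟨x', y', h1, h2, this.reachable.trans h3, h4⟩

/-- A surjective coloring is a NAC-coloring as soon as no edge has its ends joined by a path of
the other colour. -/
lemma isNACColoring_of_not_reachable {G : SimpleGraph V} {δ : Sym2 V → Bool}
    (ht : ∃ e ∈ G.edgeSet, δ e = true) (hf : ∃ e ∈ G.edgeSet, δ e = false)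
    (h : ∀ ⦃b : Bool⦄ ⦃u v : V⦄, G.Adj u v → δ s(u, v) = (!b) →
      ¬ (colorSubgraph G δ b).Reachable u v) : IsNACColoring G δ := by
  refine ⟨ht, hf, fun v c _ => ?_⟩
  have key : ∀ b : Bool, (c.edges.filter (fun e => δ e == !b)).length ≠ 1 := by
    intro b hb
    obtain ⟨x, y, hxy, hc, h1, h2⟩ := exists_reachable_of_length_filter_eq_one c hb
    exact h hxy hc (h2.trans h1).symm
  have k0 := key false
  have k1 := key true
  simp only [Bool.not_false, Bool.not_true, beq_true, beq_false] at k0 k1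
  by_cases h0 : (c.edges.filter (fun e => δ e)).length = 0
  · right; left
    rw [List.length_eq_zero_iff, List.filter_eq_nil_iff] at h0
    simpa using h0
  by_cases h1 : (c.edges.filter (fun e => !δ e)).length = 0
  · left
    rw [List.length_eq_zero_iff, List.filter_eq_nil_iff] at h1
    simpa using h1
  right; right
  omega

/-- An injective real labeling of the connected components of a finite graph. -/
lemma exists_component_labeling [Finite V] (H : SimpleGraph V) :
    ∃ a : V → ℝ, ∀ u v, a u = a v ↔ H.Reachable u v := by
  obtain ⟨n, ⟨e⟩⟩ := Finite.exists_equiv_fin H.ConnectedComponent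
  refine ⟨fun v => ((e (H.connectedComponentMk v) : ℕ) : ℝ), fun u v => ?_⟩
  rw [Nat.cast_inj, Fin.val_inj, e.apply_eq_iff_eq, ConnectedComponent.eq]

/-- The zigzag-grid motion with coordinates `a`, `b`. -/
noncomputable def gridMotion (a b : V → ℝ) (t : ℝ) (v : V) : Plane :=
  !₂[a v + b v * cos (π * t), b v * sin (π * t)]

lemma dist_gridMotion (a b : V → ℝ) (t : ℝ) (u v : V) :
    dist (gridMotion a b t u) (gridMotion a b t v) =
      √((a u - a v) ^ 2 + (b u - b v) ^ 2 + 2 * (a u - a v) * (b u - b v) * cos (π * t)) := by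
  rw [EuclideanSpace.dist_eq, Fin.sum_univ_two]
  simp only [gridMotion, Real.dist_eq, sq_abs, PiLp.toLp_apply, Matrix.cons_val_zero,
    Matrix.cons_val_one]
  congr 1
  linear_combination (b u - b v) ^ 2 * Real.sin_sq_add_cos_sq (π * t)

lemma continuous_gridMotion (a b : V → ℝ) : Continuous (gridMotion a b) := by
  refine continuous_pi fun v => ?_
  unfold gridMotion
  refine (PiLp.continuous_toLp 2 _).comp (continuous_pi fun i => ?_)
  fin_cases i <;> simp <;> fun_prop

lemma IsNACColoring.exists_isFlexibleLabeling [Finite V] {G : SimpleGraph V} {δ : Sym2 V → Bool}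
    (hδ : IsNACColoring G δ) : ∃ lam : Sym2 V → ℝ, IsFlexibleLabeling G lam := by
  obtain ⟨a, ha⟩ := exists_component_labeling (colorSubgraph G δ true)
  obtain ⟨b, hb⟩ := exists_component_labeling (colorSubgraph G δ false)
  have hcol : ∀ ⦃u v⦄, G.Adj u v → (a u = a v ∧ b u ≠ b v) ∨ (a u ≠ a v ∧ b u = b v) := by
    intro u v huv
    cases hc : δ s(u, v)
    · right
      exact ⟨fun h => hδ.not_reachable huv (by simpa using hc) ((ha u v).1 h),
        (hb u v).2 (Adj.reachable ⟨huv, hc⟩)⟩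
    · left
      exact ⟨(ha u v).2 (Adj.reachable ⟨huv, hc⟩),
        fun h => hδ.not_reachable huv (by simpa using hc) ((hb u v).1 h)⟩
  have hdist : ∀ ⦃u v⦄, G.Adj u v → ∀ t, dist (gridMotion a b t u) (gridMotion a b t v) =
      √((a u - a v) ^ 2 + (b u - b v) ^ 2) := by
    intro u v huv t
    rw [dist_gridMotion]
    rcases hcol huv with h | h
    · simp [h.1]
    · simp [h.2]
  have hpos : ∀ ⦃u v⦄, G.Adj u v → 0 < √((a u - a v) ^ 2 + (b u - b v) ^ 2) := by
    intro u v huv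
    apply Real.sqrt_pos.2
    rcases hcol huv with h | h
    · have := sub_ne_zero.2 h.2
      positivity
    · have := sub_ne_zero.2 h.1
      positivity
  have hpair : ∃ u v, a u ≠ a v ∧ b u ≠ b v := by
    obtain ⟨e, he, hred⟩ := hδ.1
    obtain ⟨e', he', hblue⟩ := hδ.2.1
    induction e with | _ r₁ r₂
    induction e' with | _ s₁ s₂
    have hr : a r₁ = a r₂ := (ha _ _).2 (Adj.reachable ⟨he, hred⟩)
    have hs : b s₁ = b s₂ := (hb _ _).2 (Adj.reachable ⟨he', hblue⟩)
    have hr' : b r₁ ≠ b r₂ := by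
      rcases hcol he with h | h
      · exact h.2
      · exact absurd hr h.1
    have hs' : a s₁ ≠ a s₂ := by
      rcases hcol he' with h | h
      · exact absurd hs h.2
      · exact h.1
    by_contra! hcon
    have h11 := hcon s₁ r₁
    have h12 := hcon s₁ r₂
    have h21 := hcon s₂ r₁
    have h22 := hcon s₂ r₂
    grind
  refine ⟨Sym2.lift ⟨fun u v => dist (gridMotion a b 0 u) (gridMotion a b 0 v),
    fun u v => dist_comm _ _⟩, ?_, gridMotion a b 0, fun u v _ => rfl, gridMotion a b,
    ⟨(continuous_gridMotion a b).continuousOn, rfl, fun t _ => ⟨fun u v huv => ?_,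
      fun u v huv => ?_⟩⟩, fun htriv => ?_⟩
  · intro e he
    induction e with | _ u v
    change 0 < dist (gridMotion a b 0 u) (gridMotion a b 0 v)
    rw [hdist he]
    exact hpos he
  · rw [← dist_pos, hdist huv]
    exact hpos huv
  · rw [hdist huv, hdist huv]
  · obtain ⟨u, v, hauv, hbuv⟩ := hpair
    have h := htriv 1 ⟨zero_le_one, le_rfl⟩ u v
    rw [dist_gridMotion, dist_gridMotion] at h
    simp only [mul_one, mul_zero, cos_pi, cos_zero] at h
    rw [Real.sqrt_inj (by nlinarith [sq_nonneg (a u - a v - (b u - b v))])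
      (by nlinarith [sq_nonneg (a u - a v + (b u - b v))])] at h
    have : (a u - a v) * (b u - b v) = 0 := by linarith
    rcases mul_eq_zero.1 this with h | h
    · exact hauv (sub_eq_zero.1 h)
    · exact hbuv (sub_eq_zero.1 h)

/-- An element of a field extension of an algebraically closed field `k` lying outside `k` has
value less than one for some valuation ring containing `k`. -/
lemma exists_valuationSubring_valuation_lt_one {k K : Type*} [Field k] [IsAlgClosed k] [Field K]
    (φ : k →+* K) {g : K} (hg : g ∉ φ.range) :
    ∃ A : ValuationSubring K, (∀ c, φ c ∈ A) ∧ A.valuation g < 1 := by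
  algebraize [φ]
  have hcl : IsIntegrallyClosedIn φ.range K := by
    rw [Subring.isIntegrallyClosedIn_iff]
    intro x hx
    obtain ⟨p, hp, hpx⟩ := hx
    obtain ⟨q, hq, -, hqm⟩ := Polynomial.lifts_and_degree_eq_and_monic
      (f := φ.rangeRestrict) (p := p) (Polynomial.mem_lifts _ |>.2
        (Polynomial.map_surjective _ φ.rangeRestrict_surjective p)) hp
    have hx : IsIntegral k x := by
      refine ⟨q, hqm, ?_⟩
      rw [← hq, Polynomial.eval₂_map] at hpx
      exact hpx
    exact minpoly.mem_range_of_degree_eq_one k x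
      (IsAlgClosed.degree_eq_one_of_irreducible k (minpoly.irreducible hx))
  have hg' : g⁻¹ ∉ φ.range := by
    rintro ⟨c, hc⟩
    exact hg ⟨c⁻¹, by rw [map_inv₀, hc, inv_inv]⟩
  obtain ⟨A, hA, hgA⟩ := Subring.exists_le_valuationSubring_of_isIntegrallyClosedIn hg'
  refine ⟨A, fun c => hA ⟨c, rfl⟩, ?_⟩
  rw [← ValuationSubring.valuation_le_one_iff, not_le, map_inv₀] at hgA
  contrapose! hgA
  exact inv_le_one_of_one_le₀ hgA

/-- The coloring of the edges of a graph by the values of coordinate differences. -/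
lemma exists_isNACColoring_of_valuation {K Γ : Type*} [Field K]
    [LinearOrderedCommGroupWithZero Γ] (ν : Valuation K Γ) {G : SimpleGraph V} (P Q : V → K)
    (h : ∀ ⦃u v⦄, G.Adj u v → ν (P v - P u) * ν (Q v - Q u) = 1)
    (hlt : ∃ u v, G.Adj u v ∧ ν (P v - P u) < 1) (hge : ∃ u v, G.Adj u v ∧ 1 ≤ ν (P v - P u)) :
    ∃ δ : Sym2 V → Bool, IsNACColoring G δ := by
  classical
  refine ⟨Sym2.lift ⟨fun u v => decide (ν (P v - P u) < 1), fun u v => ?_⟩, ?_⟩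
  · simp only [ν.map_sub_swap]
  obtain ⟨u₁, v₁, h₁, h₁'⟩ := hlt
  obtain ⟨u₂, v₂, h₂, h₂'⟩ := hge
  refine isNACColoring_of_not_reachable ⟨s(u₁, v₁), h₁, by simpa using h₁'⟩
    ⟨s(u₂, v₂), h₂, by simpa using h₂'⟩ ?_
  rintro b u v huv hc ⟨w⟩
  cases b
  · have hQ : ν (Q v - Q u) ≤ 1 := by
      clear hc huv
      induction w with
      | nil => simp
      | @cons x y z hxy w ih =>
        have hxy' : 1 ≤ ν (P y - P x) := by simpa using hxy.2
        have h1 : ν (Q y - Q x) ≤ 1 := by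
          rw [← h hxy.1]
          exact le_mul_of_one_le_left' hxy'
        rw [← sub_add_sub_cancel]
        exact ν.map_add_le ih h1
    have hP : ν (P v - P u) < 1 := by simpa using hc
    have : ν (P v - P u) * ν (Q v - Q u) < 1 :=
      (mul_le_of_le_one_right' hQ).trans_lt hP
    exact this.ne (h huv)
  · have hP : ν (P v - P u) < 1 := by
      clear hc huv
      induction w with
      | nil => simp
      | @cons x y z hxy w ih =>
        have hxy' : ν (P y - P x) < 1 := by simpa using hxy.2
        rw [← sub_add_sub_cancel]
        exact ν.map_add_lt ih hxy'
    exact hP.not_ge (by simpa using hc)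

/-- A function with infinite range is not constant along a suitable ultrafilter. -/
lemma exists_ultrafilter_ne_const {α β : Type*} {g : α → β} (hg : (Set.range g).Infinite) :
    ∃ U : Ultrafilter α, ∀ c, ∀ᶠ t in (U : Filter α), g t ≠ c := by
  have : (Filter.comap g Filter.cofinite).NeBot := by
    rw [Filter.comap_neBot_iff_frequently]
    exact fun h => hg (h.subset fun y hy hc => hc hy)
  refine ⟨Ultrafilter.of (Filter.comap g Filter.cofinite), fun c => ?_⟩
  apply Ultrafilter.of_le
  exact Filter.preimage_mem_comap (Set.finite_singleton c).compl_mem_cofinite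

/-- The diagonal embedding of a field into an ultrapower of it. -/
def germConstHom {α : Type*} (U : Ultrafilter α) (k : Type*) [Field k] :
    k →+* (U : Filter α).Germ k where
  toFun c := (c : (U : Filter α).Germ k)
  map_one' := rfl
  map_zero' := rfl
  map_mul' _ _ := rfl
  map_add' _ _ := rfl

lemma ValuationSubring.valuation_map_eq_one {k K : Type*} [Field k] [Field K]
    (A : ValuationSubring K) (φ : k →+* K) (hφ : ∀ c, φ c ∈ A) {c : k} (hc : c ≠ 0) :
    A.valuation (φ c) = 1 := by
  refine le_antisymm ((A.valuation_le_one_iff _).2 (hφ c)) ?_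
  have h := (A.valuation_le_one_iff _).2 (hφ c⁻¹)
  rw [map_inv₀, map_inv₀] at h
  exact (inv_le_one₀ (by simpa [zero_lt_iff] using hc)).1 h

/-- A connected graph whose edge vectors, relative to a fixed edge, do not rotate keeps all of its
distances. -/
lemma norm_sub_eq_of_ratio_eq {G : SimpleGraph V} (hconn : G.Connected) {y z : V → ℂ} {c d : ℂ}
    (hcd : ‖c‖ = ‖d‖) (hc : c ≠ 0)
    (h : ∀ ⦃u v⦄, G.Adj u v → (y v - y u) / c = (z v - z u) / d) (u v : V) :
    ‖y u - y v‖ = ‖z u - z v‖ := by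
  obtain ⟨w⟩ := hconn.preconnected v u
  have hw : (y u - y v) / c = (z u - z v) / d := by
    induction w with
    | nil => simp
    | @cons a b e hab w ih =>
      rw [← sub_add_sub_cancel (y e) (y b), ← sub_add_sub_cancel (z e) (z b), add_div, add_div, ih,
        h hab]
  have hn := congrArg norm hw
  rw [norm_div, norm_div, ← hcd] at hn
  exact (div_left_inj' (norm_ne_zero_iff.2 hc)).1 hn

/-- A continuous nontrivial motion in the complex plane that preserves the edge lengths yields a
NAC-coloring. -/
lemma exists_isNACColoring_of_motion {α : Type*} [TopologicalSpace α] [PreconnectedSpace α]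
    {G : SimpleGraph V} (hconn : G.Connected) (hne : G.edgeSet.Nonempty) {z : α → V → ℂ}
    (hz : ∀ v, Continuous fun t => z t v) (hplace : ∀ t ⦃u v⦄, G.Adj u v → z t u ≠ z t v)
    (hlen : ∀ s t ⦃u v⦄, G.Adj u v → ‖z s u - z s v‖ = ‖z t u - z t v‖)
    (hnt : ∃ s t u v, ‖z s u - z s v‖ ≠ ‖z t u - z t v‖) :
    ∃ δ : Sym2 V → Bool, IsNACColoring G δ := by
  obtain ⟨s₀, t₀, x₀, y₀, hxy₀⟩ := hnt
  obtain ⟨e, he⟩ := hne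
  induction e with | _ a b
  have hab : G.Adj a b := he
  have hD : ∀ t, z t b - z t a ≠ 0 := fun t => sub_ne_zero.2 (hplace t hab).symm
  obtain ⟨u, v, huv, hr⟩ : ∃ u v, G.Adj u v ∧
      (z s₀ v - z s₀ u) / (z s₀ b - z s₀ a) ≠ (z t₀ v - z t₀ u) / (z t₀ b - z t₀ a) := by
    by_contra! hcon
    exact hxy₀ (norm_sub_eq_of_ratio_eq hconn (hlen s₀ t₀ hab.symm) (hD s₀) hcon x₀ y₀)
  have hrange : (Set.range fun t => (z t v - z t u) / (z t b - z t a)).Infinite := by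
    refine (isPreconnected_range ?_).infinite_of_nontrivial
      ⟨_, ⟨s₀, rfl⟩, _, ⟨t₀, rfl⟩, hr⟩
    exact ((hz v).sub (hz u)).div ((hz b).sub (hz a)) hD
  obtain ⟨U, hU⟩ := exists_ultrafilter_ne_const hrange
  let P : V → (U : Filter α).Germ ℂ := fun x => ((fun t => z t x / (z t b - z t a) : α → ℂ) :)
  let Q : V → (U : Filter α).Germ ℂ :=
    fun x => ((fun t => (starRingEnd ℂ) (z t x / (z t b - z t a)) : α → ℂ) :)
  have hP : ∀ x y, P y - P x =
      ((fun t => (z t y - z t x) / (z t b - z t a) : α → ℂ) : (U : Filter α).Germ ℂ) := by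
    intro x y
    simp only [sub_div]
    rfl
  have hQ : ∀ x y, Q y - Q x = ((fun t => (starRingEnd ℂ) ((z t y - z t x) / (z t b - z t a)) :
      α → ℂ) : (U : Filter α).Germ ℂ) := by
    intro x y
    simp only [sub_div, map_sub]
    rfl
  have hg : P v - P u ∉ (germConstHom U ℂ).range := by
    rintro ⟨c, hc⟩
    rw [hP] at hc
    have h1 := Filter.Germ.coe_eq.1 hc
    obtain ⟨t, ht, ht'⟩ := ((hU c).and h1).exists
    exact ht ht'.symm
  obtain ⟨A, hA, hAg⟩ := exists_valuationSubring_valuation_lt_one _ hg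
  refine exists_isNACColoring_of_valuation A.valuation P Q (fun x y hxy => ?_) ⟨u, v, huv, hAg⟩
    ⟨a, b, hab, ?_⟩
  · have hprod : (P y - P x) * (Q y - Q x) = germConstHom U ℂ
        (((‖z s₀ y - z s₀ x‖ / ‖z s₀ b - z s₀ a‖) ^ 2 : ℝ) : ℂ) := by
      rw [hP, hQ, ← Filter.Germ.coe_mul]
      refine congrArg _ (funext fun t => ?_)
      rw [Pi.mul_apply, Complex.mul_conj', norm_div, hlen t s₀ hxy.symm, hlen t s₀ hab.symm]
      push_cast
      rfl
    rw [← map_mul, hprod]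
    refine A.valuation_map_eq_one _ hA ?_
    have h1 := norm_ne_zero_iff.2 (sub_ne_zero.2 (hplace s₀ hxy).symm)
    have h2 := norm_ne_zero_iff.2 (hD s₀)
    exact Complex.ofReal_ne_zero.2 (pow_ne_zero _ (div_ne_zero h1 h2))
  · have hone : P b - P a = 1 := by
      rw [hP]
      exact congrArg _ (funext fun t => div_self (hD t))
    rw [hone, map_one]

/-- The identification of the Euclidean plane with the complex numbers. -/
def Plane.toComplex (x : Plane) : ℂ := ⟨x 0, x 1⟩

lemma Plane.norm_toComplex_sub (x y : Plane) : ‖x.toComplex - y.toComplex‖ = dist x y := by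
  rw [EuclideanSpace.dist_eq, Fin.sum_univ_two, Complex.norm_def, Complex.normSq_apply]
  simp [toComplex, Real.dist_eq, pow_two]

lemma Plane.continuous_toComplex : Continuous Plane.toComplex := by
  have : Plane.toComplex = fun x => Complex.equivRealProdCLM.symm (x 0, x 1) := by
    ext x
    apply Complex.ext <;> simp [toComplex]
  rw [this]
  fun_prop

lemma IsFlexibleLabeling.exists_isNACColoring {G : SimpleGraph V} (hconn : G.Connected)
    (hne : G.edgeSet.Nonempty) {lam : Sym2 V → ℝ} (h : IsFlexibleLabeling G lam) :
    ∃ δ : Sym2 V → Bool, IsNACColoring G δ := by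
  obtain ⟨-, p, -, f, ⟨hcont, h0, hf⟩, hnt⟩ := h
  refine exists_isNACColoring_of_motion (α := Set.Icc (0 : ℝ) 1) hconn hne
    (z := fun t v => (f t v).toComplex) (fun v => ?_) (fun t u v huv heq => ?_)
    (fun s t u v huv => ?_) ?_
  · exact Plane.continuous_toComplex.comp
      ((continuous_apply v).comp (continuousOn_iff_continuous_domRestrict.1 hcont))
  · refine (hf t t.2).1 huv ?_
    rw [← dist_eq_zero, ← Plane.norm_toComplex_sub, heq, sub_self, norm_zero]
  · rw [Plane.norm_toComplex_sub, Plane.norm_toComplex_sub, ← (hf s s.2).2 huv,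
      (hf t t.2).2 huv]
  · unfold IsTrivialFlex PCongruent at hnt
    push Not at hnt
    obtain ⟨t, ht, u, v, huv⟩ := hnt
    refine ⟨⟨t, ht⟩, ⟨0, by simp⟩, u, v, ?_⟩
    rwa [Plane.norm_toComplex_sub, Plane.norm_toComplex_sub, h0]

/-- A connected non-trivial graph has a flexible labeling if and only if it has a
NAC-coloring. -/
theorem flexible_labeling_iff_NAC_coloring [Fintype V] (G : SimpleGraph V)
    (hconn : G.Connected) (hne : G.edgeSet.Nonempty) :
    (∃ lam : Sym2 V → ℝ, IsFlexibleLabeling G lam) ↔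
      ∃ δ : Sym2 V → Bool, IsNACColoring G δ := by
  exact ⟨fun ⟨_, h⟩ => h.exists_isNACColoring hconn hne,
    fun ⟨_, h⟩ => h.exists_isFlexibleLabeling⟩
end

section
/- Let G be a graph and let U(G) denote the set of all pairs {u,v} ⊂ V_G such that uv ∉ E_G and there exists a path from u to v in G which is monochromatic for every NAC-coloring δ of G. Let G' = (V_G, E_G ∪ U(G)). Then G is movable if and only if G' is movable. -/
open SimpleGraph Real

variable {V : Type*}

/-- The pairs `{u, v}` of non-adjacent vertices joined by a path that is
monochromatic for every NAC-coloring of `G`. -/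
def UPairs (G : SimpleGraph V) : Set (Sym2 V) :=
  {p | ∃ u v : V, p = s(u, v) ∧ u ≠ v ∧ ¬ G.Adj u v ∧
    ∃ w : G.Walk u v, w.IsPath ∧
      ∀ δ : Sym2 V → Bool, IsNACColoring G δ →
        (∀ e ∈ w.edges, δ e = true) ∨ (∀ e ∈ w.edges, δ e = false)}

/-- The displacements along the darts of a walk telescope. -/
lemma SimpleGraph.Walk.sum_darts_sub {G : SimpleGraph V} {A : Type*} [AddCommGroup A] (h : V → A)
    {u v : V} (w : G.Walk u v) : (w.darts.map fun d => h d.fst - h d.snd).sum = h u - h v := by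
  induction w with
  | nil => simp
  | cons _ _ ih => simp [ih]

/-- A sum with exactly one term outside a given subgroup lies outside that subgroup. -/
lemma AddSubgroup.list_sum_notMem {A : Type*} [AddCommGroup A] (S : AddSubgroup A)
    {l : List A} (p : A → Bool) (hp : ∀ a ∈ l, p a = true ↔ a ∉ S) (hl : l.countP p = 1) :
    l.sum ∉ S := by
  induction l with
  | nil => simp at hl
  | cons a l ih =>
    rw [List.sum_cons]
    by_cases ha : a ∈ S
    · have hpa : ¬ p a = true := fun h => (hp a (by simp)).1 h ha
      rw [S.add_mem_cancel_left ha]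
      exact ih (fun b hb => hp b (by simp [hb])) (by simpa [List.countP_cons, hpa] using hl)
    · have hpa : p a = true := (hp a (by simp)).2 ha
      have h0 : l.countP p = 0 := by simpa [List.countP_cons, hpa] using hl
      have hS : l.sum ∈ S := list_sum_mem fun b hb => by
        by_contra hbS
        exact List.countP_eq_zero.1 h0 b hb ((hp b (by simp [hb])).2 hbS)
      rwa [S.add_mem_cancel_right hS]

/-- If the edges of colour `b` are those whose displacement under `h` avoids the subgroup `S`, then
a closed walk does not have exactly one edge of colour `b`. -/
lemma SimpleGraph.Walk.countP_edges_ne_one {G : SimpleGraph V} {A : Type*} [AddCommGroup A]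
    (S : AddSubgroup A) (h : V → A) (P : Sym2 V → Bool)
    (hP : ∀ ⦃u v⦄, G.Adj u v → (P s(u, v) = true ↔ h u - h v ∉ S)) {u : V} (c : G.Walk u u) :
    c.edges.countP P ≠ 1 := by
  classical
  intro hc
  rw [Walk.edges, List.countP_map] at hc
  refine S.list_sum_notMem (l := c.darts.map fun d => h d.fst - h d.snd)
    (fun a => decide (a ∉ S)) (by simp) ?_ (by simp [c.sum_darts_sub h])
  rw [List.countP_map, ← hc]
  refine List.countP_congr fun d _ => ?_
  exact decide_eq_true_iff.trans (hP d.adj).symm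

/-- Thresholding a valuation of edge displacements gives a NAC-coloring. -/
lemma exists_isNACColoring_of_valuation_lt {G : SimpleGraph V} {K Γ : Type*} [Field K]
    [LinearOrderedCommGroupWithZero Γ] (ν : Valuation K Γ) (x y : V → K)
    (hxy : ∀ ⦃u v⦄, G.Adj u v → ν (x u - x v) * ν (y u - y v) = 1)
    {a b c d : V} (hab : G.Adj a b) (hcd : G.Adj c d) (hlt : ν (x a - x b) < ν (x c - x d)) :
    ∃ δ, IsNACColoring G δ ∧ δ s(a, b) = false ∧ δ s(c, d) = true := by
  classical
  set α := ν (x a - x b)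
  let δ : Sym2 V → Bool := Sym2.lift
    ⟨fun u v => decide (α < ν (x u - x v)), fun u v => by simp only [ν.map_sub_swap (x u)]⟩
  have hδ : ∀ u v, δ s(u, v) = true ↔ α < ν (x u - x v) := fun u v => by simp [δ]
  have hfalse : δ s(a, b) = false := by
    rw [← Bool.not_eq_true, hδ]; exact lt_irrefl _
  have htrue : δ s(c, d) = true := (hδ c d).2 hlt
  have hα0 : α ≠ 0 := left_ne_zero_of_mul_eq_one (hxy hab)
  refine ⟨δ, ⟨⟨_, hcd, htrue⟩, ⟨_, hab, hfalse⟩, fun v w _ => ?_⟩, hfalse, htrue⟩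
  have hred : w.edges.countP (fun e => δ e) ≠ 1 :=
    w.countP_edges_ne_one (ν.leAddSubgroup α) x _ fun u v _ => by
      rw [hδ, Valuation.mem_leAddSubgroup_iff, not_le]
  have hblue : w.edges.countP (fun e => !(δ e)) ≠ 1 :=
    w.countP_edges_ne_one (ν.ltAddSubgroup (Units.mk0 α⁻¹ (inv_ne_zero hα0))) y _
      fun u v huv => by
        have h0 : ν (x u - x v) ≠ 0 := left_ne_zero_of_mul_eq_one (hxy huv)
        rw [Valuation.mem_ltAddSubgroup_iff, Units.val_mk0, not_lt,
          eq_inv_of_mul_eq_one_right (hxy huv),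
          inv_le_inv₀ (zero_lt_iff.2 hα0) (zero_lt_iff.2 h0), ← not_lt, ← hδ]
        simp
  rw [← List.countP_eq_length_filter, ← List.countP_eq_length_filter]
  rcases Nat.eq_zero_or_pos (w.edges.countP fun e => δ e) with h | h
  · exact .inr <| .inl fun e he => by simpa using List.countP_eq_zero.1 h e he
  rcases Nat.eq_zero_or_pos (w.edges.countP fun e => !(δ e)) with h' | h'
  · exact .inl fun e he => by simpa using List.countP_eq_zero.1 h' e he
  · exact .inr <| .inr ⟨by omega, by omega⟩

/-- An element of an extension of an algebraically closed field `k` that is not in `k` is avoided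
by some valuation subring containing `k`. -/
lemma IsAlgClosed.exists_valuationSubring_notMem {k K : Type*} [Field k] [IsAlgClosed k] [Field K]
    (ι : k →+* K) {x : K} (hx : x ∉ ι.range) :
    ∃ O : ValuationSubring K, (∀ c, ι c ∈ O) ∧ x ∉ O := by
  let := ι.toAlgebra
  have : IsIntegrallyClosedIn ι.range K := by
    refine Subring.isIntegrallyClosedIn_iff.2 fun {y} hy => ?_
    let e : k ≃+* ι.range :=
      RingEquiv.ofBijective ι.rangeRestrict ⟨fun _ _ h => ι.injective (congrArg Subtype.val h),
        ι.rangeRestrict_surjective⟩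
    have hy' : IsIntegral k y := by
      refine hy.map_of_comp_eq e.symm.toRingHom (RingHom.id K) ?_
      ext c
      exact congrArg Subtype.val (e.apply_symm_apply c)
    exact minpoly.mem_range_of_degree_eq_one k y
      (IsAlgClosed.degree_eq_one_of_irreducible k (minpoly.irreducible hy'))
  obtain ⟨O, hO, hxO⟩ := Subring.exists_le_valuationSubring_of_isIntegrallyClosedIn hx
  exact ⟨O, fun c => hO ⟨c, rfl⟩, hxO⟩

/-- A function with infinite range is non-constant along some ultrafilter. -/
lemma exists_ultrafilter_eventually_ne {T B : Type*} {r : T → B} (hr : (Set.range r).Infinite) :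
    ∃ U : Ultrafilter T, ∀ c, ∀ᶠ t in U, r t ≠ c := by
  have : (Filter.comap r Filter.cofinite).NeBot :=
    Filter.comap_neBot_iff_frequently.2 (Filter.frequently_cofinite_iff_infinite.2 hr)
  refine ⟨Ultrafilter.of (Filter.comap r Filter.cofinite), fun c => ?_⟩
  exact Ultrafilter.of_le _ (Filter.tendsto_comap.eventually
    (Set.finite_singleton c).eventually_cofinite_notMem)

/-- If the ratio of two edge displacements takes infinitely many values over a family of
placements with constant edge lengths, then some NAC-coloring separates the two edges. -/
lemma exists_isNACColoring_of_infinite_range {G : SimpleGraph V} {T : Type*} (z : V → T → ℂ)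
    (lam : Sym2 V → ℝ) (hpos : ∀ e ∈ G.edgeSet, 0 < lam e)
    (hz : ∀ ⦃u v⦄, G.Adj u v → ∀ t, ‖z u t - z v t‖ = lam s(u, v))
    {a b c d : V} (hab : G.Adj a b) (hcd : G.Adj c d)
    (hinf : (Set.range fun t => (z c t - z d t) / (z a t - z b t)).Infinite) :
    ∃ δ, IsNACColoring G δ ∧ δ s(a, b) = false ∧ δ s(c, d) = true := by
  obtain ⟨U, hU⟩ := exists_ultrafilter_eventually_ne hinf
  let ofFun : (T → ℂ) →+* Filter.Germ (U : Filter T) ℂ := Filter.Germ.coeRingHom _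
  let ι : ℂ →+* Filter.Germ (U : Filter T) ℂ := ofFun.comp (Pi.constRingHom T ℂ)
  have hx : ofFun (z c - z d) / ofFun (z a - z b) ∉ ι.range := by
    rintro ⟨q, hq⟩
    have hq' : (fun _ => q) =ᶠ[(U : Filter T)] (z c - z d) / (z a - z b) :=
      Filter.Germ.coe_eq.1 hq
    obtain ⟨t, ht, ht'⟩ := (hq'.and (hU q)).exists
    exact ht' ht.symm
  obtain ⟨O, hO, hxO⟩ := IsAlgClosed.exists_valuationSubring_notMem ι hx
  have hι : ∀ q : ℂ, q ≠ 0 → O.valuation (ι q) = 1 := fun q hq => by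
    refine le_antisymm ((O.valuation_le_one_iff _).2 (hO q)) ?_
    have h := (O.valuation_le_one_iff _).2 (hO q⁻¹)
    have hne : O.valuation (ι q) ≠ 0 := by simpa using hq
    rwa [map_inv₀, map_inv₀, inv_le_one₀ (zero_lt_iff.2 hne)] at h
  have hxy : ∀ ⦃u v⦄, G.Adj u v → O.valuation (ofFun (z u) - ofFun (z v)) *
      O.valuation (ofFun (star (z u)) - ofFun (star (z v))) = 1 := fun u v huv => by
    rw [← map_sub, ← map_sub, ← map_mul, ← map_mul,
      ← hι ((lam s(u, v) : ℂ) ^ 2) (pow_ne_zero 2 (by exact_mod_cast (hpos _ huv).ne'))]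
    refine congrArg (fun g => O.valuation (ofFun g)) (funext fun t => ?_)
    have := Complex.mul_conj' (z u t - z v t)
    rw [hz huv t] at this
    simpa using this
  refine exists_isNACColoring_of_valuation_lt O.valuation (fun v => ofFun (z v))
    (fun v => ofFun (star (z v))) hxy hab hcd ?_
  have h0 := left_ne_zero_of_mul_eq_one (hxy hab)
  rwa [← O.valuation_le_one_iff, not_le, map_div₀, map_sub ofFun, map_sub ofFun,
    one_lt_div₀ (zero_lt_iff.2 h0)] at hxO

/-- A continuous function on a preconnected space with finite range is constant. -/
lemma Continuous.const_of_finite_range {T B : Type*} [TopologicalSpace T] [PreconnectedSpace T]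
    [MetricSpace B] {r : T → B} (hr : Continuous r) (hfin : (Set.range r).Finite) (s t : T) :
    r s = r t :=
  hfin.countable.isTotallyDisconnected _ subset_rfl (isPreconnected_range hr) ⟨s, rfl⟩ ⟨t, rfl⟩

/-- Along a continuous motion with constant edge lengths, the end points of a path that is
monochromatic for every NAC-coloring keep their distance. -/
lemma norm_sub_eq_of_monochromatic {G : SimpleGraph V} {T : Type*} [TopologicalSpace T]
    [PreconnectedSpace T] (z : V → T → ℂ) (hcont : ∀ v, Continuous (z v))
    (lam : Sym2 V → ℝ) (hpos : ∀ e ∈ G.edgeSet, 0 < lam e)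
    (hz : ∀ ⦃u v⦄, G.Adj u v → ∀ t, ‖z u t - z v t‖ = lam s(u, v))
    {u v : V} (w : G.Walk u v)
    (hw : ∀ δ : Sym2 V → Bool, IsNACColoring G δ →
      (∀ e ∈ w.edges, δ e = true) ∨ (∀ e ∈ w.edges, δ e = false)) (s t : T) :
    ‖z u s - z v s‖ = ‖z u t - z v t‖ := by
  rcases hd : w.darts with _ | ⟨d₀, l⟩
  · obtain rfl := (Walk.darts_eq_nil.1 hd).eq
    simp
  have hd₀ : d₀ ∈ w.darts := by simp [hd]
  have hne : ∀ t, z d₀.fst t - z d₀.snd t ≠ 0 := fun t => by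
    rw [← norm_pos_iff, hz d₀.adj]
    exact hpos _ d₀.adj
  have hspan : z u - z v ∈ ℂ ∙ (z d₀.fst - z d₀.snd) := by
    rw [← w.sum_darts_sub z]
    refine list_sum_mem fun x hx => ?_
    obtain ⟨d, hd, rfl⟩ := List.mem_map.1 hx
    have hfin : (Set.range fun t => (z d.fst t - z d.snd t) / (z d₀.fst t - z d₀.snd t)).Finite := by
      by_contra hinf
      obtain ⟨δ, hδ, h₀, h₁⟩ :=
        exists_isNACColoring_of_infinite_range z lam hpos hz d₀.adj d.adj hinf
      have m₀ : s(d₀.fst, d₀.snd) ∈ w.edges := List.mem_map_of_mem hd₀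
      have m₁ : s(d.fst, d.snd) ∈ w.edges := List.mem_map_of_mem hd
      rcases hw δ hδ with h | h
      · simp [h _ m₀] at h₀
      · simp [h _ m₁] at h₁
    have hconst := Continuous.const_of_finite_range
      (((hcont _).sub (hcont _)).div ((hcont _).sub (hcont _)) hne) hfin
    refine Submodule.mem_span_singleton.2
      ⟨(z d.fst s - z d.snd s) / (z d₀.fst s - z d₀.snd s), funext fun t => ?_⟩
    have h := hconst s t
    simp only [Pi.div_apply, Pi.sub_apply] at h
    simp [h, div_mul_cancel₀ _ (hne t)]
  obtain ⟨q, hq⟩ := Submodule.mem_span_singleton.1 hspan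
  have hq' : ∀ t, ‖z u t - z v t‖ = ‖q‖ * lam s(d₀.fst, d₀.snd) := fun t => by
    rw [← hz d₀.adj t, ← norm_mul]
    exact congrArg norm (congrFun hq t).symm
  rw [hq', hq']

/-- A flex of `(G, p)` keeps the distance of each pair in `UPairs G`. -/
lemma IsFlex.dist_eq_of_mem_UPairs {G : SimpleGraph V} {p : V → Plane} {f : ℝ → V → Plane}
    (hf : IsFlex G p f) {u v : V} (huv : s(u, v) ∈ UPairs G) {t : ℝ} (ht : t ∈ Set.Icc (0 : ℝ) 1) :
    dist (p u) (p v) = dist (f t u) (f t v) := by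
  obtain ⟨hcont, h0, hft⟩ := hf
  have hmem0 : (0 : ℝ) ∈ Set.Icc (0 : ℝ) 1 := by simp
  obtain ⟨a, b, hab, -, -, w, -, hw⟩ := huv
  have : PreconnectedSpace (Set.Icc (0 : ℝ) 1) := Subtype.preconnectedSpace isPreconnected_Icc
  let φ : Plane ≃ₗᵢ[ℝ] ℂ := Complex.orthonormalBasisOneI.repr.symm
  have hφ : ∀ x y : Plane, ‖φ x - φ y‖ = dist x y := fun x y => by rw [← dist_eq_norm, φ.dist_map]
  let lam : Sym2 V → ℝ := Sym2.lift ⟨fun u v => dist (p u) (p v), fun u v => dist_comm _ _⟩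
  have key := norm_sub_eq_of_monochromatic (G := G) (T := Set.Icc (0 : ℝ) 1)
    (fun v t => φ (f t v))
    (fun v => φ.continuous.comp ((continuous_apply v).comp hcont.domRestrict)) lam
    (fun e => by
      induction e with
      | h u v => exact fun h => dist_pos.2 (h0 ▸ (hft 0 hmem0).1 h))
    (fun u v huv t => by rw [hφ]; exact ((hft t t.2).2 huv).symm) w hw ⟨0, hmem0⟩ ⟨t, ht⟩
  simp only [hφ, h0] at key
  rcases Sym2.eq_iff.1 hab with ⟨rfl, rfl⟩ | ⟨rfl, rfl⟩
  · exact key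
  · rwa [_root_.dist_comm, _root_.dist_comm (f t _)]

/-- Movability passes to spanning subgraphs. -/
lemma Movable.mono {G H : SimpleGraph V} (hGH : G ≤ H) (hH : Movable H) : Movable G := by
  obtain ⟨lam, hpos, p, hp, f, ⟨hcont, h0, hft⟩, hnt, hinj⟩ := hH
  exact ⟨lam, fun e he => hpos e (edgeSet_mono hGH he), p, fun u v h => hp (hGH h), f,
    ⟨hcont, h0, fun t ht => ⟨fun u v h => (hft t ht).1 (hGH h),
      fun u v h => (hft t ht).2 (hGH h)⟩⟩, hnt, hinj⟩

/-- A graph is movable iff the graph obtained by adding all pairs in `U(G)` as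
edges is movable. -/
theorem movable_iff_addUPairs_movable [Fintype V] (G : SimpleGraph V) :
    Movable G ↔ Movable (SimpleGraph.fromEdgeSet (G.edgeSet ∪ UPairs G)) := by
  refine ⟨?_, Movable.mono fun u v h => (fromEdgeSet_adj _).2 ⟨.inl h, h.ne⟩⟩
  rintro ⟨-, -, p, -, f, hf, hnt, hinj⟩
  have hequiv : ∀ t ∈ Set.Icc (0 : ℝ) 1,
      FrameworkEquiv (fromEdgeSet (G.edgeSet ∪ UPairs G)) p (f t) := fun t ht u v h =>
    ((fromEdgeSet_adj _).1 h).1.elim (fun h => (hf.2.2 t ht).2 h) (hf.dist_eq_of_mem_UPairs · ht)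
  obtain ⟨t₀, ht₀, hinj₀⟩ : ∃ t ∈ Set.Icc (0 : ℝ) 1, Function.Injective (f t) := by
    obtain ⟨t, ht, ht'⟩ := (Set.Icc_infinite (zero_lt_one' ℝ)).exists_notMem_finite hinj
    exact ⟨t, ht, by_contra fun h => ht' ⟨ht, h⟩⟩
  have hpl : IsPlacement (fromEdgeSet (G.edgeSet ∪ UPairs G)) p := fun u v h => by
    rw [← dist_pos, hequiv t₀ ht₀ h, dist_pos]
    exact hinj₀.ne h.ne
  refine ⟨Sym2.lift ⟨fun u v => dist (p u) (p v), fun u v => dist_comm _ _⟩, fun e => ?_, p,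
    fun u v _ => rfl, f, ⟨hf.1, hf.2.1, fun t ht => ⟨fun u v h => ?_, hequiv t ht⟩⟩, hnt, hinj⟩
  · induction e with
    | h u v => exact fun h => dist_pos.2 (hpl h)
  · rw [← dist_pos, ← hequiv t ht h]
    exact dist_pos.2 (hpl h)
end
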